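/- Let α : ℝ^n → ℝ be locally log-Hölder continuous and let 0 < q < ∞. Then there exists a constant c > 0 such that for every complex sequence λ = {λ_{v,m}}_{v∈ℕ₀,m∈ℤ^n} and every collection {E_{v,m}}_{v∈ℕ₀,m∈ℤ^n} of measurable sets with E_{v,m} ⊂ Q_{v,m} and |E_{v,m}| > |Q_{v,m}|/2 for all v, m, one has ‖λ‖_{f^{α(·)}_{∞,q}} ≤ c ‖ (∑_{v=0}^∞ ∑_{m∈ℤ^n} 2^{v(α(·)+n/2)q} |λ_{v,m}|^q χ_{E_{v,m}})^{1/q} ‖_{L^∞}. -/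

import Mathlib

open MeasureTheory ENNReal Real Set

noncomputable section

/-- Euclidean space ℝ^n. -/
abbrev En (n : ℕ) := EuclideanSpace ℝ (Fin n)

/-- `g` is locally log-Hölder continuous with constant `c`. -/
def LocLogHolder {n : ℕ} (c : ℝ) (g : En n → ℝ) : Prop :=
  0 < c ∧ ∀ x y : En n, |g x - g y| ≤ c / Real.log (Real.exp 1 + 1 / ‖x - y‖)

/-- `g` is globally log-Hölder continuous with local constant `c`. -/
def GlobLogHolder {n : ℕ} (c : ℝ) (g : En n → ℝ) : Prop :=
  LocLogHolder c g ∧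
    ∃ (gi cd : ℝ), 0 < cd ∧ ∀ x : En n, |g x - gi| ≤ cd / Real.log (Real.exp 1 + ‖x‖)

/-- The kernel η_{v,h}(x) = 2^{nv} (1 + 2^v |x|)^{-h}. -/
def eta (n : ℕ) (v : ℕ) (h : ℝ) (x : En n) : ℝ :=
  (2 : ℝ) ^ (n * v) * (1 + (2 : ℝ) ^ v * ‖x‖) ^ (-h)

/-- The dyadic cube Q_{v,m}. -/
def dyadicCube (n : ℕ) (v : ℤ) (m : Fin n → ℤ) : Set (En n) :=
  {x | ∀ i, (m i : ℝ) ≤ (2 : ℝ) ^ v * x i ∧ (2 : ℝ) ^ v * x i < m i + 1}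

/-- Luxemburg (quasi-)norm of an ℝ≥0∞-valued function with variable exponent `p`. -/
def luxNorm {n : ℕ} (p : En n → ℝ) (F : En n → ℝ≥0∞) : ℝ≥0∞ :=
  sInf {c : ℝ≥0∞ | 0 < c ∧ ∫⁻ x, (F x / c) ^ p x ≤ 1}

/-- The mixed Lebesgue-sequence space norm ‖(F_v)_v‖_{L^{p(·)}(ℓ_{q(·)})}. -/
def mixedNorm {n : ℕ} (p q : En n → ℝ) (F : ℕ → En n → ℝ≥0∞) : ℝ≥0∞ :=
  luxNorm p fun x => (∑' v : ℕ, F v x ^ q x) ^ (1 / q x)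

/-- The sequence space norm ‖λ‖_{f^{α(·)}_{p(·),q(·)}}. -/
def seqNorm {n : ℕ} (α p q : En n → ℝ) (lam : ℕ → (Fin n → ℤ) → ℂ) : ℝ≥0∞ :=
  mixedNorm p q fun v x =>
    ∑' m : Fin n → ℤ,
      ENNReal.ofReal ((2 : ℝ) ^ ((v : ℝ) * (α x + n / 2)) * ‖lam v m‖) *
        (dyadicCube n (v : ℤ) m).indicator (fun _ => (1 : ℝ≥0∞)) x

/-- The sequence space norm ‖λ‖_{f^{α(·)}_{∞,q}}. -/
def seqNormInf {n : ℕ} (α : En n → ℝ) (q : ℝ) (lam : ℕ → (Fin n → ℤ) → ℂ) : ℝ≥0∞ :=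
  ⨆ (vQ : ℤ) (mQ : Fin n → ℤ),
    volume (dyadicCube n vQ mQ) ^ (-(1 / q)) *
      (∑' v : ℕ, if vQ ≤ (v : ℤ) then
          ∫⁻ x in dyadicCube n vQ mQ,
            ∑' m : Fin n → ℤ,
              ENNReal.ofReal ((2 : ℝ) ^ ((v : ℝ) * (α x + n / 2) * q) * ‖lam v m‖ ^ q) *
                (dyadicCube n (v : ℤ) m).indicator (fun _ => (1 : ℝ≥0∞)) x
        else 0) ^ (1 / q)

/-- The Calderón product (quasi-)norm associated to two sequence space norms. -/
def calderonNorm {n : ℕ} (N0 N1 : (ℕ → (Fin n → ℤ) → ℂ) → ℝ≥0∞) (θ : ℝ)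
    (lam : ℕ → (Fin n → ℤ) → ℂ) : ℝ≥0∞ :=
  sInf {M : ℝ≥0∞ | ∃ μ ν : ℕ → (Fin n → ℤ) → ℂ, N0 μ ≤ 1 ∧ N1 ν ≤ 1 ∧
    ∀ v m, ENNReal.ofReal ‖lam v m‖ ≤
      M * ENNReal.ofReal ‖μ v m‖ ^ (1 - θ) * ENNReal.ofReal ‖ν v m‖ ^ θ}

/-!
Two estimates give the bound. On a cube `Q_{v,m}` of side `2^{-v}`, log-Hölder continuity makes
`v * |α x - α y|` bounded, because `log (e + 1 / |x - y|)` is at least of order `v` there; hence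
`2 ^ (v α)` is constant on `Q_{v,m}` up to a factor independent of `v` and `m`. A function which
is nearly constant on `Q_{v,m}` has its integral over `Q_{v,m}` controlled by its integral over
any subset `E_{v,m}` of comparable measure. A cube `Q_{v,m}` with `v ≥ v_Q` that meets `Q` lies in
`Q`, so summing over `v` and `m` bounds the average over `Q` in the `f^{α(·)}_{∞,q}` norm by the
average over `Q` of the sum over the sets `E_{v,m}`, which is at most its essential supremum.
-/

section Measure

variable {X ι : Type*} [MeasurableSpace X] {μ : Measure X}

lemma setLIntegral_le_mul_setLIntegral_of_le_mul {A B : Set X} (hA : MeasurableSet A)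
    (hB : MeasurableSet B) {κ D : ℝ≥0∞} (hD : D ≠ ∞) (hμ : μ A ≤ κ * μ B) {f : X → ℝ≥0∞}
    (hf : ∀ x ∈ A, ∀ y ∈ B, f x ≤ D * f y) :
    ∫⁻ x in A, f x ∂μ ≤ κ * D * ∫⁻ x in B, f x ∂μ := by
  set a := ⨆ x ∈ A, f x
  have a_le : ∀ y ∈ B, a ≤ D * f y := fun y hy => iSup₂_le fun x hx => hf x hx y hy
  calc ∫⁻ x in A, f x ∂μ ≤ ∫⁻ _ in A, a ∂μ :=
        setLIntegral_mono' hA fun x hx => le_iSup₂ (f := fun x _ => f x) x hx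
    _ = a * μ A := setLIntegral_const A a
    _ ≤ a * (κ * μ B) := by gcongr
    _ = κ * ∫⁻ _ in B, a ∂μ := by rw [setLIntegral_const, mul_left_comm]
    _ ≤ κ * ∫⁻ y in B, D * f y ∂μ := by gcongr 1; exact setLIntegral_mono' hB a_le
    _ = κ * D * ∫⁻ y in B, f y ∂μ := by rw [lintegral_const_mul' D f hD, mul_assoc]

lemma setLIntegral_tsum_mul_indicator [Countable ι] {f : ι → X → ℝ≥0∞}
    (hf : ∀ i, Measurable (f i)) {A : ι → Set X} (hA : ∀ i, MeasurableSet (A i)) (Q : Set X) :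
    ∫⁻ x in Q, ∑' i, f i x * (A i).indicator (fun _ => 1) x ∂μ =
      ∑' i, ∫⁻ x in A i ∩ Q, f i x ∂μ := by
  have hmeas (i : ι) : Measurable fun x => f i x * (A i).indicator (fun _ => 1) x :=
    (hf i).mul (measurable_const.indicator (hA i))
  rw [lintegral_tsum fun i => (hmeas i).aemeasurable]
  refine tsum_congr fun i => ?_
  rw [← Measure.restrict_restrict (hA i), ← lintegral_indicator (hA i)]
  simp only [← Set.indicator_mul_right, mul_one]

end Measure

lemma rpow_neg_mul_rpow_le_of_le_mul {a b V : ℝ≥0∞} {r : ℝ} (hr : 0 ≤ r) (h : a ≤ b * V) :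
    V ^ (-r) * a ^ r ≤ b ^ r :=
  calc V ^ (-r) * a ^ r ≤ V ^ (-r) * (b * V) ^ r := by gcongr
    _ = b ^ r * ((V ^ r)⁻¹ * V ^ r) := by
        rw [ENNReal.mul_rpow_of_nonneg _ _ hr, ENNReal.rpow_neg, mul_left_comm]
    _ ≤ b ^ r := mul_le_of_le_one_right' (ENNReal.inv_mul_le_one _)

section DyadicCube

variable {n : ℕ}

lemma mem_dyadicCube_iff_floor {v : ℤ} {m : Fin n → ℤ} {x : En n} :
    x ∈ dyadicCube n v m ↔ ∀ i, ⌊(2 : ℝ) ^ v * x i⌋ = m i := by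
  simp only [dyadicCube, mem_ofPred_eq, Int.floor_eq_iff]

lemma measurableSet_dyadicCube (v : ℤ) (m : Fin n → ℤ) : MeasurableSet (dyadicCube n v m) := by
  simp only [dyadicCube, ofPred_forall, ofPred_and]
  exact MeasurableSet.iInter fun i =>
    (measurableSet_le (by fun_prop) (by fun_prop)).inter
      (measurableSet_lt (by fun_prop) (by fun_prop))

lemma floor_zpow_mul_eq_ediv {u v : ℤ} (huv : u ≤ v) (t : ℝ) :
    ⌊(2 : ℝ) ^ u * t⌋ = ⌊(2 : ℝ) ^ v * t⌋ / (2 ^ (v - u).toNat : ℕ) := by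
  rw [← Int.floor_div_natCast]
  congr 1
  have hpow : (2 : ℝ) ^ v = 2 ^ u * 2 ^ (v - u).toNat := by
    rw [← zpow_natCast, Int.toNat_of_nonneg (sub_nonneg.2 huv), ← zpow_add₀ two_ne_zero,
      add_sub_cancel]
  rw [hpow]
  push_cast
  field_simp

lemma dyadicCube_subset_or_disjoint {u v : ℤ} (huv : u ≤ v) (k m : Fin n → ℤ) :
    dyadicCube n v m ⊆ dyadicCube n u k ∨ Disjoint (dyadicCube n v m) (dyadicCube n u k) := by
  refine or_iff_not_imp_right.2 fun hmeet => ?_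
  obtain ⟨x, hxv, hxu⟩ := not_disjoint_iff.1 hmeet
  intro z hz
  rw [mem_dyadicCube_iff_floor] at hxv hxu hz ⊢
  intro i
  rw [← hxu i, floor_zpow_mul_eq_ediv huv, floor_zpow_mul_eq_ediv huv, hz i, hxv i]

lemma two_zpow_mul_norm_sub_le_of_mem_dyadicCube {v : ℤ} {m : Fin n → ℤ} {x y : En n}
    (hx : x ∈ dyadicCube n v m) (hy : y ∈ dyadicCube n v m) :
    (2 : ℝ) ^ v * ‖x - y‖ ≤ √n := by
  have hcoord : ∀ i, ((2 : ℝ) ^ v * (x i - y i)) ^ 2 ≤ 1 := fun i => by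
    rw [sq_le_one_iff_abs_le_one, abs_le]
    constructor <;> linarith [hx i, hy i]
  refine Real.le_sqrt_of_sq_le ?_
  calc ((2 : ℝ) ^ v * ‖x - y‖) ^ 2 = ∑ i, ((2 : ℝ) ^ v * (x i - y i)) ^ 2 := by
        simp only [mul_pow, EuclideanSpace.real_norm_sq_eq, Finset.mul_sum, PiLp.sub_apply]
    _ ≤ ∑ _i : Fin n, 1 := Finset.sum_le_sum fun i _ => hcoord i
    _ = n := by simp

end DyadicCube

section LogHolder

variable {n : ℕ} {α : En n → ℝ}

/-- `α` oscillates by at most `K / v` on every dyadic cube of level `v : ℕ`, so that `2 ^ (v α)`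
is nearly constant there. The bound is multiplied out so that level `0` carries no condition
beyond `0 ≤ K`. -/
def DyadicOscLE (K : ℝ) (α : En n → ℝ) : Prop :=
  ∀ (v : ℕ) (m : Fin n → ℤ), ∀ x ∈ dyadicCube n v m, ∀ y ∈ dyadicCube n v m,
    v * |α x - α y| ≤ K

lemma one_le_log_exp_one_add {s : ℝ} (hs : 0 ≤ s) : 1 ≤ Real.log (Real.exp 1 + s) := by
  rw [Real.le_log_iff_exp_le (by positivity)]
  linarith

lemma natCast_mul_log_two_le_of_two_pow_mul_le {v : ℕ} {t a : ℝ} (ht : 0 < t)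
    (h : 2 ^ v * t ≤ a) :
    v * Real.log 2 ≤ Real.log a + Real.log (Real.exp 1 + 1 / t) := by
  have ha : 0 < a := lt_of_lt_of_le (by positivity) h
  have hpow : (2 : ℝ) ^ v ≤ a * (Real.exp 1 + 1 / t) :=
    calc (2 : ℝ) ^ v ≤ a * (1 / t) := by rwa [mul_one_div, le_div_iff₀ ht]
      _ ≤ a * (Real.exp 1 + 1 / t) := by gcongr; linarith [Real.exp_pos 1]
  rw [← Real.log_pow, ← Real.log_mul ha.ne' (by positivity)]
  exact Real.log_le_log (by positivity) hpow

lemma LocLogHolder.dyadicOscLE {c : ℝ} (h : LocLogHolder c α) :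
    DyadicOscLE (c * ((Real.log (n + 1) + 1) / Real.log 2)) α := by
  obtain ⟨hc, hα⟩ := h
  intro v m x hx y hy
  have hlog2 : 0 < Real.log 2 := Real.log_pos one_lt_two
  have hlogn : 0 ≤ Real.log ((n : ℝ) + 1) := Real.log_nonneg (by simp)
  rcases eq_or_ne x y with rfl | hxy
  · rw [sub_self, abs_zero, mul_zero]
    positivity
  have hpos : 0 < ‖x - y‖ := norm_sub_pos_iff.2 hxy
  set L := Real.log (Real.exp 1 + 1 / ‖x - y‖)
  have hL : 1 ≤ L := one_le_log_exp_one_add (by positivity)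
  have hdiam : 2 ^ v * ‖x - y‖ ≤ (n : ℝ) + 1 := by
    have hsqrt : √(n : ℝ) ≤ n + 1 := Real.sqrt_le_iff.2 ⟨by positivity, by nlinarith⟩
    simpa only [zpow_natCast] using (two_zpow_mul_norm_sub_le_of_mem_dyadicCube hx hy).trans hsqrt
  have hv : (v : ℝ) ≤ (Real.log (n + 1) + 1) / Real.log 2 * L := by
    rw [div_mul_eq_mul_div, le_div_iff₀ hlog2]
    nlinarith [natCast_mul_log_two_le_of_two_pow_mul_le hpos hdiam]
  calc (v : ℝ) * |α x - α y| ≤ (Real.log (n + 1) + 1) / Real.log 2 * L * (c / L) := by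
        gcongr
        exact hα x y
    _ = c * ((Real.log (n + 1) + 1) / Real.log 2) := by field_simp

open Filter Topology in
lemma LocLogHolder.continuous {c : ℝ} (h : LocLogHolder c α) : Continuous α := by
  refine continuous_iff_continuousAt.2 fun x => continuousAt_iff_punctured_nhds.2 ?_
  have hinv : Tendsto (fun y => 1 / ‖y - x‖) (𝓝[≠] x) atTop := by
    simpa only [one_div, Function.comp_def] using
      tendsto_inv_nhdsGT_zero.comp (tendsto_norm_sub_self_nhdsNE x)
  have hmodulus : Tendsto (fun y => c / Real.log (Real.exp 1 + 1 / ‖y - x‖)) (𝓝[≠] x) (𝓝 0) :=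
    (Real.tendsto_log_atTop.comp (tendsto_atTop_add_const_left _ _ hinv)).const_div_atTop c
  exact tendsto_iff_norm_sub_tendsto_zero.2
    (squeeze_zero (fun _ => norm_nonneg _) (fun y => h.2 y x) hmodulus)

end LogHolder

section MajorFamily

variable {n : ℕ} {κ : ℝ≥0∞} {E : ℕ → (Fin n → ℤ) → Set (En n)}

/-- A family of measurable sets `E_{v,m} ⊂ Q_{v,m}` with `|Q_{v,m}| ≤ κ |E_{v,m}|`. Such a family
may replace the dyadic cubes in the sequence space norm. -/
structure IsDyadicMajorFamily (κ : ℝ≥0∞) (E : ℕ → (Fin n → ℤ) → Set (En n)) : Prop where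
  measurableSet (v : ℕ) (m : Fin n → ℤ) : MeasurableSet (E v m)
  subset (v : ℕ) (m : Fin n → ℤ) : E v m ⊆ dyadicCube n v m
  volume_le (v : ℕ) (m : Fin n → ℤ) : volume (dyadicCube n v m) ≤ κ * volume (E v m)

lemma IsDyadicMajorFamily.volume_inter_le (hE : IsDyadicMajorFamily κ E) {u : ℤ} {v : ℕ}
    (huv : u ≤ v) (k m : Fin n → ℤ) :
    volume (dyadicCube n v m ∩ dyadicCube n u k) ≤ κ * volume (E v m ∩ dyadicCube n u k) := by
  rcases dyadicCube_subset_or_disjoint huv k m with hsub | hdisj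
  · rw [inter_eq_left.2 hsub, inter_eq_left.2 ((hE.subset v m).trans hsub)]
    exact hE.volume_le v m
  · simp only [hdisj.inter_eq, measure_empty, zero_le]

variable {D : ℝ≥0∞} {w : ℕ → (Fin n → ℤ) → En n → ℝ≥0∞}

lemma IsDyadicMajorFamily.setLIntegral_tsum_le (hE : IsDyadicMajorFamily κ E) (hD : D ≠ ∞)
    {u : ℤ} {v : ℕ} (huv : u ≤ v) (hw : ∀ m, Measurable (w v m))
    (hcomp : ∀ m, ∀ x ∈ dyadicCube n v m, ∀ y ∈ dyadicCube n v m, w v m x ≤ D * w v m y)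
    (k : Fin n → ℤ) :
    ∫⁻ x in dyadicCube n u k, ∑' m, w v m x * (dyadicCube n v m).indicator (fun _ => 1) x ≤
      κ * D * ∫⁻ x in dyadicCube n u k, ∑' m, w v m x * (E v m).indicator (fun _ => 1) x := by
  have hQ := measurableSet_dyadicCube u k
  rw [setLIntegral_tsum_mul_indicator hw (measurableSet_dyadicCube (v : ℤ)),
    setLIntegral_tsum_mul_indicator hw (hE.measurableSet v), ← ENNReal.tsum_mul_left]
  refine ENNReal.tsum_le_tsum fun m => ?_
  exact setLIntegral_le_mul_setLIntegral_of_le_mul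
    ((measurableSet_dyadicCube v m).inter hQ) ((hE.measurableSet v m).inter hQ) hD
    (hE.volume_inter_le huv k m) fun x hx y hy => hcomp m x hx.1 y (hE.subset v m hy.1)

lemma IsDyadicMajorFamily.tsum_setLIntegral_le (hE : IsDyadicMajorFamily κ E) (hD : D ≠ ∞)
    (hw : ∀ v m, Measurable (w v m))
    (hcomp : ∀ (v : ℕ) m, ∀ x ∈ dyadicCube n v m, ∀ y ∈ dyadicCube n v m,
      w v m x ≤ D * w v m y)
    {M : ℝ≥0∞} (hM : ∀ᵐ x, ∑' (v : ℕ) (m), w v m x * (E v m).indicator (fun _ => 1) x ≤ M)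
    (u : ℤ) (k : Fin n → ℤ) :
    (∑' v : ℕ, if u ≤ (v : ℤ) then ∫⁻ x in dyadicCube n u k,
        ∑' m, w v m x * (dyadicCube n v m).indicator (fun _ => 1) x else 0) ≤
      κ * D * M * volume (dyadicCube n u k) := by
  set Q := dyadicCube n u k
  have hmeas (v : ℕ) : Measurable fun x => ∑' m, w v m x * (E v m).indicator (fun _ => 1) x :=
    Measurable.tsum fun m => (hw v m).mul (measurable_const.indicator (hE.measurableSet v m))
  calc _ ≤ ∑' v : ℕ, κ * D * ∫⁻ x in Q, ∑' m, w v m x * (E v m).indicator (fun _ => 1) x := by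
        refine ENNReal.tsum_le_tsum fun v => ?_
        split_ifs with huv
        · exact hE.setLIntegral_tsum_le hD huv (hw v) (hcomp v) k
        · exact zero_le
    _ = κ * D * ∫⁻ x in Q, ∑' (v : ℕ) (m), w v m x * (E v m).indicator (fun _ => 1) x := by
        rw [ENNReal.tsum_mul_left, lintegral_tsum fun v => (hmeas v).aemeasurable]
    _ ≤ κ * D * ∫⁻ _ in Q, M := by
        gcongr 1
        exact lintegral_mono_ae (ae_restrict_of_ae hM)
    _ = κ * D * M * volume Q := by rw [setLIntegral_const, ← mul_assoc]

end MajorFamily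

section SequenceSpace

variable {n : ℕ} {α : En n → ℝ} {q : ℝ}

/-- The coefficient `2 ^ (v (α(x) + n / 2) q) |λ_{v,m}| ^ q` of the characteristic function
`χ_{v,m}(x)` in the `f^{α(·)}_{∞,q}` norm. -/
def seqWeight (α : En n → ℝ) (q : ℝ) (lam : ℕ → (Fin n → ℤ) → ℂ) (v : ℕ) (m : Fin n → ℤ)
    (x : En n) : ℝ≥0∞ :=
  ENNReal.ofReal ((2 : ℝ) ^ ((v : ℝ) * (α x + n / 2) * q) * ‖lam v m‖ ^ q)

lemma measurable_seqWeight (hα : Measurable α) (lam : ℕ → (Fin n → ℤ) → ℂ) (v : ℕ)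
    (m : Fin n → ℤ) : Measurable (seqWeight α q lam v m) := by
  unfold seqWeight
  fun_prop

lemma DyadicOscLE.seqWeight_le_mul {K : ℝ} (hα : DyadicOscLE K α) (hq : 0 ≤ q)
    (lam : ℕ → (Fin n → ℤ) → ℂ) (v : ℕ) (m : Fin n → ℤ) {x y : En n}
    (hx : x ∈ dyadicCube n v m) (hy : y ∈ dyadicCube n v m) :
    seqWeight α q lam v m x ≤ ENNReal.ofReal (2 ^ (K * q)) * seqWeight α q lam v m y := by
  have hosc : v * (α x - α y) ≤ K :=
    (mul_le_mul_of_nonneg_left (le_abs_self _) v.cast_nonneg).trans (hα v m x hx y hy)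
  have hexp : (v : ℝ) * (α x + n / 2) * q ≤ K * q + v * (α y + n / 2) * q := by nlinarith
  unfold seqWeight
  rw [← ENNReal.ofReal_mul (by positivity), ← mul_assoc, ← Real.rpow_add two_pos]
  gcongr
  exact one_le_two

theorem stmt5_general {K : ℝ} (hα : Measurable α) (hK : DyadicOscLE K α) (hq : 0 < q)
    (κ : NNReal) (lam : ℕ → (Fin n → ℤ) → ℂ) {E : ℕ → (Fin n → ℤ) → Set (En n)}
    (hE : IsDyadicMajorFamily κ E) :
    seqNormInf α q lam ≤
      ENNReal.ofReal ((κ * 2 ^ (K * q)) ^ (1 / q)) *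
        essSup (fun x =>
          (∑' (v : ℕ) (m : Fin n → ℤ),
            ENNReal.ofReal ((2 : ℝ) ^ ((v : ℝ) * (α x + n / 2) * q) * ‖lam v m‖ ^ q) *
              (E v m).indicator (fun _ => (1 : ℝ≥0∞)) x) ^ (1 / q)) volume := by
  have hr : 0 ≤ 1 / q := by positivity
  set D := ENNReal.ofReal (2 ^ (K * q))
  set M := essSup (fun x => (∑' (v : ℕ) (m : Fin n → ℤ),
    seqWeight α q lam v m x * (E v m).indicator (fun _ => (1 : ℝ≥0∞)) x) ^ (1 / q)) volume
  have hM : ∀ᵐ x, ∑' (v : ℕ) (m : Fin n → ℤ),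
      seqWeight α q lam v m x * (E v m).indicator (fun _ => 1) x ≤ M ^ q := by
    filter_upwards [ENNReal.ae_le_essSup _] with x hx
    exact (ENNReal.rpow_inv_le_iff hq).1 (one_div q ▸ hx)
  have hcube (u : ℤ) (k : Fin n → ℤ) := rpow_neg_mul_rpow_le_of_le_mul hr <|
    hE.tsum_setLIntegral_le ENNReal.ofReal_ne_top (measurable_seqWeight hα lam)
      (fun v m _ hx _ hy => hK.seqWeight_le_mul hq.le lam v m hx hy) hM u k
  calc seqNormInf α q lam ≤ (κ * D * M ^ q) ^ (1 / q) := iSup₂_le hcube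
    _ = (κ * D) ^ (1 / q) * M := by
        rw [ENNReal.mul_rpow_of_nonneg _ _ hr, one_div, ENNReal.rpow_rpow_inv hq.ne']
    _ = ENNReal.ofReal ((κ * 2 ^ (K * q)) ^ (1 / q)) * M := by
        rw [← ENNReal.ofReal_rpow_of_nonneg (by positivity) hr,
          ENNReal.ofReal_mul κ.coe_nonneg, ENNReal.ofReal_coe_nnreal]

end SequenceSpace

/-- one direction of Proposition `prop1`: the `f^{α(·)}_{∞,q}` norm is
dominated by the `L^∞` norm of the corresponding expression over any choice of
subsets `E_{v,m} ⊂ Q_{v,m}` with `|E_{v,m}| > |Q_{v,m}|/2`. -/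
theorem stmt5 {n : ℕ} (α : En n → ℝ) (hα : ∃ c, LocLogHolder c α)
    (q : ℝ) (hq : 0 < q) :
    ∃ c : ℝ, 0 < c ∧ ∀ (lam : ℕ → (Fin n → ℤ) → ℂ) (E : ℕ → (Fin n → ℤ) → Set (En n)),
      (∀ (v : ℕ) (m : Fin n → ℤ), MeasurableSet (E v m) ∧ E v m ⊆ dyadicCube n (v : ℤ) m ∧
        volume (dyadicCube n (v : ℤ) m) / 2 < volume (E v m)) →
      seqNormInf α q lam ≤
        ENNReal.ofReal c *
          essSup (fun x =>
            (∑' (v : ℕ) (m : Fin n → ℤ),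
              ENNReal.ofReal ((2 : ℝ) ^ ((v : ℝ) * (α x + n / 2) * q) * ‖lam v m‖ ^ q) *
                (E v m).indicator (fun _ => (1 : ℝ≥0∞)) x) ^ (1 / q)) volume := by
  obtain ⟨c, hα⟩ := hα
  exact ⟨_, by positivity, fun lam E hE => stmt5_general hα.continuous.measurable hα.dyadicOscLE hq
    2 lam ⟨fun v m => (hE v m).1, fun v m => (hE v m).2.1, fun v m =>
      (ENNReal.div_le_iff' two_ne_zero ofNat_ne_top).1 (hE v m).2.2.le⟩⟩
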